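/- Let p be an odd prime and n ≥ 1. Then ℚ_p^× / ⟨(ℚ_p^×)^{pⁿ}, q⟩ is cyclic of order pⁿ, generated by the class of 1+p, for any q ∈ ℚ_p^× with ord_p(q) ≥ 1 and p ∤ ord_p(q). -/

import Mathlib

lemma zmod_key (p : ℕ) [hpf : Fact p.Prime] (hp : Odd p) (m n : ℕ) (w : (ZMod (p^(m+1)))ˣ) :
    ∃ k : ℕ, k < p ^ n ∧ ∃ z : ZMod (p^(m+1)), (w : ZMod (p^(m+1))) = (1+(p:ZMod (p^(m+1))))^k * z^(p^n) := by
  have hpp := hpf.out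
  have hp2 : p ≠ 2 := by rintro rfl; revert hp; decide
  have : NeZero (p^(m+1)) := ⟨pow_ne_zero _ hpp.ne_zero⟩
  have ho := ZMod.orderOf_one_add_prime hpp hp2 m
  have hpos : 0 < p ^ m := pow_pos hpp.pos _
  have hU : IsUnit (1 + (p : ZMod (p^(m+1)))) := by
    apply IsUnit.of_pow_eq_one (n := p^m) _ hpos.ne'
    rw [← ho]; exact pow_orderOf_eq_one _
  obtain ⟨U, hU⟩ := hU
  rw [← hU, orderOf_units] at ho
  have hidx : (Subgroup.zpowers U).index = p - 1 := by
    have h := (Subgroup.zpowers U).card_mul_index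
    rw [Nat.card_zpowers, ho, Nat.card_eq_fintype_card, ZMod.card_units_eq_totient,
      Nat.totient_prime_pow_succ hpp] at h
    exact Nat.eq_of_mul_eq_mul_left hpos h
  have hmem : w ^ (p - 1) ∈ Subgroup.zpowers U := by
    rw [← hidx]; exact Subgroup.pow_index_mem _ _
  have hmem2 : w ^ (p ^ n - 1) ∈ Subgroup.zpowers U := by
    obtain ⟨b, hb⟩ : p - 1 ∣ p ^ n - 1 := by simpa using Nat.sub_dvd_pow_sub_pow p 1 n
    rw [hb, pow_mul]; exact Subgroup.pow_mem _ hmem _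
  obtain ⟨j, hj⟩ := hmem2
  have hpn : 0 < p ^ n := pow_pos hpp.pos _
  have hpn' : (0:ℤ) < ((p ^ n : ℕ) : ℤ) := by exact_mod_cast hpn
  obtain ⟨k, hk⟩ := Int.eq_ofNat_of_zero_le (Int.emod_nonneg (-j) hpn'.ne')
  have hk2 := Int.emod_lt_of_pos (-j) hpn'
  have hdm := Int.emod_add_mul_ediv (-j) ((p ^ n : ℕ) : ℤ)
  rw [hk] at hk2 hdm
  refine ⟨k, by exact_mod_cast hk2, ((w * U ^ ((-j) / ((p ^ n : ℕ) : ℤ)) : (ZMod (p^(m+1)))ˣ) : ZMod (p^(m+1))), ?_⟩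
  rw [← hU, ← Units.val_pow_eq_pow_val, ← Units.val_pow_eq_pow_val, ← Units.val_mul]
  congr 1
  have e : w ^ (p ^ n) = w * U ^ j := by
    have : U ^ j = w ^ (p ^ n - 1) := hj
    rw [this, ← pow_succ', Nat.sub_add_cancel hpn]
  rw [mul_pow, e, ← zpow_natCast, ← zpow_natCast (U ^ _), ← zpow_mul]
  have : U ^ (k:ℤ) * (w * U ^ j * U ^ (-j / ((p ^ n : ℕ) : ℤ) * ((p ^ n : ℕ) : ℤ))) = w * (U ^ ((k:ℤ) + j + (-j / ((p ^ n : ℕ) : ℤ) * ((p ^ n : ℕ) : ℤ)))) := by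
    rw [zpow_add, zpow_add]; simp only [mul_assoc, mul_comm, mul_left_comm]
  rw [this, show (k:ℤ) + j + (-j / ((p ^ n : ℕ) : ℤ) * ((p ^ n : ℕ) : ℤ)) = 0 by linarith]
  simp

lemma zp_key (p : ℕ) [hpf : Fact p.Prime] (hp : Odd p) (n : ℕ) (w : ℤ_[p]ˣ) :
    ∃ k : ℕ, ∃ z : ℤ_[p], (w : ℤ_[p]) = (1+(p:ℤ_[p]))^k * z^(p^n) := by
  let S : Set ℤ_[p] := ⋃ k ∈ Finset.range (p ^ n), Set.range fun z : ℤ_[p] => (1+(p:ℤ_[p]))^k * z^(p^n)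
  have hS : IsClosed S := by
    apply Set.Finite.isClosed_biUnion (Finset.finite_toSet _)
    intro k _
    exact (isCompact_range (by fun_prop)).isClosed
  have hw : (w : ℤ_[p]) ∈ closure S := by
    rw [Metric.mem_closure_iff]
    intro ε hε
    obtain ⟨m, hm⟩ := PadicInt.exists_pow_neg_lt p hε
    obtain ⟨k, hk, z, hz⟩ := zmod_key p hp m n (Units.map (PadicInt.toZModPow (p := p) (m+1)).toMonoidHom w)
    obtain ⟨z, rfl⟩ := ZMod.ringHom_surjective (PadicInt.toZModPow (p := p) (m+1)) z
    refine ⟨(1+(p:ℤ_[p]))^k * z^(p^n), ?_, ?_⟩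
    · simp only [S, Set.mem_iUnion]
      exact ⟨k, by simpa using hk, z, rfl⟩
    · rw [dist_eq_norm]
      have h2 : (w : ℤ_[p]) - (1+(p:ℤ_[p]))^k * z^(p^n) ∈ Ideal.span {(p:ℤ_[p])^(m+1)} := by
        rw [← PadicInt.ker_toZModPow, RingHom.mem_ker, map_sub, sub_eq_zero]
        simpa using hz
      rw [← PadicInt.norm_le_pow_iff_mem_span_pow] at h2
      refine h2.trans_lt (lt_of_le_of_lt ?_ hm)
      apply zpow_le_zpow_right₀
      · exact_mod_cast hpf.out.one_le
      · push_cast; linarith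
  rw [hS.closure_eq] at hw
  simp only [S, Set.mem_iUnion] at hw
  obtain ⟨k, _, z, hz⟩ := hw
  exact ⟨k, z, hz.symm⟩

lemma zp_ord (p : ℕ) [hpf : Fact p.Prime] (hp : Odd p) (n k : ℕ) (z : ℤ_[p]ˣ)
   (h : (1+(p:ℤ_[p]))^k = (z:ℤ_[p])^(p^n)) : p ^ n ∣ k := by
  have hpp := hpf.out
  have hp2 : p ≠ 2 := by rintro rfl; revert hp; decide
  have : NeZero (p^(n+1)) := ⟨pow_ne_zero _ hpp.ne_zero⟩
  have ho := ZMod.orderOf_one_add_prime hpp hp2 n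
  have h1 := congrArg (PadicInt.toZModPow (p := p) (n+1)) h
  have h2 := ZMod.pow_totient (Units.map (PadicInt.toZModPow (p := p) (n+1)).toMonoidHom z)
  have h3 := congrArg (Units.val) h2
  rw [Nat.totient_prime_pow_succ hpp, Units.val_pow_eq_pow_val, pow_mul] at h3
  simp only [Units.coe_map, Units.val_one] at h3
  simp only [map_pow, map_add, map_one, map_natCast] at h1
  have h4 : (1 + (p : ZMod (p^(n+1)))) ^ (k * (p-1)) = 1 := by
    rw [pow_mul, h1]; exact h3
  rw [← orderOf_dvd_iff_pow_eq_one, ho] at h4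
  refine Nat.Coprime.dvd_of_dvd_mul_right ?_ h4
  apply Nat.Coprime.pow_left
  rw [hpp.coprime_iff_not_dvd]
  intro hd
  have := Nat.le_of_dvd (by have := hpp.two_le; omega) hd
  have := hpp.two_le; omega

lemma mem_H_iff (p : ℕ) [Fact p.Prime] (n : ℕ) (q x : ℚ_[p]ˣ) :
    x ∈ Subgroup.closure ((Set.range fun x : ℚ_[p]ˣ => x ^ p ^ n) ∪ {q}) ↔
      ∃ (y : ℚ_[p]ˣ) (m : ℤ), x = y ^ p ^ n * q ^ m := by
  constructor
  · intro h
    induction h using Subgroup.closure_induction with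
    | mem x hx =>
      rcases hx with ⟨y, rfl⟩ | hx
      · exact ⟨y, 0, by simp⟩
      · exact ⟨1, 1, by simpa using hx⟩
    | one => exact ⟨1, 0, by simp⟩
    | mul a b _ _ ha hb =>
      obtain ⟨y, m, rfl⟩ := ha
      obtain ⟨y', m', rfl⟩ := hb
      exact ⟨y * y', m + m', by rw [mul_pow, zpow_add]; exact mul_mul_mul_comm _ _ _ _⟩
    | inv a _ ha =>
      obtain ⟨y, m, rfl⟩ := ha
      exact ⟨y⁻¹, -m, by rw [mul_inv, inv_pow, zpow_neg]⟩
  · rintro ⟨y, m, rfl⟩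
    apply Subgroup.mul_mem
    · exact Subgroup.subset_closure (Set.mem_union_left _ ⟨y, rfl⟩)
    · apply Subgroup.zpow_mem
      exact Subgroup.subset_closure (Set.mem_union_right _ (Set.mem_singleton q))

lemma uval_mul (p : ℕ) [Fact p.Prime] (x y : ℚ_[p]ˣ) :
    ((x * y : ℚ_[p]ˣ) : ℚ_[p]).valuation = (x : ℚ_[p]).valuation + (y : ℚ_[p]).valuation := by
  rw [Units.val_mul, Padic.valuation_mul x.ne_zero y.ne_zero]

lemma uval_inv (p : ℕ) [Fact p.Prime] (x : ℚ_[p]ˣ) :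
    ((x⁻¹ : ℚ_[p]ˣ) : ℚ_[p]).valuation = -(x : ℚ_[p]).valuation := by
  rw [Units.val_inv_eq_inv_val, Padic.valuation_inv]

lemma uval_pow (p : ℕ) [Fact p.Prime] (x : ℚ_[p]ˣ) (n : ℕ) :
    ((x ^ n : ℚ_[p]ˣ) : ℚ_[p]).valuation = n * (x : ℚ_[p]).valuation := by
  rw [Units.val_pow_eq_pow_val, Padic.valuation_pow]

lemma uval_zpow (p : ℕ) [Fact p.Prime] (x : ℚ_[p]ˣ) (n : ℤ) :
    ((x ^ n : ℚ_[p]ˣ) : ℚ_[p]).valuation = n * (x : ℚ_[p]).valuation := by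
  rw [Units.val_zpow_eq_zpow_val, Padic.valuation_zpow]

lemma norm_one_of_val (p : ℕ) [Fact p.Prime] (x : ℚ_[p]ˣ) (h : (x : ℚ_[p]).valuation = 0) :
    ‖(x : ℚ_[p])‖ = 1 := by
  rw [Padic.norm_eq_zpow_neg_valuation x.ne_zero, h]; simp

lemma val_u (p : ℕ) [hpf : Fact p.Prime] (u : ℚ_[p]ˣ) (hu : (u : ℚ_[p]) = 1 + p) :
    (u : ℚ_[p]).valuation = 0 := by
  have : (u : ℚ_[p]) = ((1 + p : ℕ) : ℚ_[p]) := by rw [hu]; push_cast; rfl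
  rw [this, Padic.valuation_natCast, padicValNat.eq_zero_of_not_dvd]; · rfl
  intro h
  have := (Nat.dvd_add_left (dvd_refl p)).1 h
  exact hpf.out.one_lt.ne' (Nat.dvd_one.1 this)

/-- Let `p` be an odd prime and `n ≥ 1`. For any `q ∈ ℚ_p^×` with `ord_p(q) ≥ 1` and
`p ∤ ord_p(q)`, the quotient `ℚ_p^× / ⟨(ℚ_p^×)^{pⁿ}, q⟩` is cyclic of order `pⁿ`, generated
by the class of `1 + p`. -/
theorem padic_units_quotient_cyclic (p : ℕ) [Fact p.Prime] (hp : Odd p) (n : ℕ) (hn : 1 ≤ n)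
    (q : ℚ_[p]ˣ) (hq1 : 1 ≤ (q : ℚ_[p]).valuation)
    (hq2 : ¬ ((p : ℤ) ∣ (q : ℚ_[p]).valuation))
    (u : ℚ_[p]ˣ) (hu : (u : ℚ_[p]) = 1 + p) :
    Nat.card (ℚ_[p]ˣ ⧸ Subgroup.closure
        ((Set.range fun x : ℚ_[p]ˣ => x ^ p ^ n) ∪ {q})) = p ^ n ∧
    ∀ x : ℚ_[p]ˣ ⧸ Subgroup.closure ((Set.range fun x : ℚ_[p]ˣ => x ^ p ^ n) ∪ {q}),
      x ∈ Subgroup.zpowers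
        ((QuotientGroup.mk u : ℚ_[p]ˣ ⧸ Subgroup.closure
          ((Set.range fun x : ℚ_[p]ˣ => x ^ p ^ n) ∪ {q}))) := by

  have hpp := (Fact.out : p.Prime)
  have hgen : ∀ x : ℚ_[p]ˣ ⧸ Subgroup.closure ((Set.range fun x : ℚ_[p]ˣ => x ^ p ^ n) ∪ {q}),
      x ∈ Subgroup.zpowers
        ((QuotientGroup.mk u : ℚ_[p]ˣ ⧸ Subgroup.closure
          ((Set.range fun x : ℚ_[p]ˣ => x ^ p ^ n) ∪ {q}))) := by
    intro x
    obtain ⟨x, rfl⟩ := QuotientGroup.mk_surjective x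
    have hcop : IsCoprime ((q : ℚ_[p]).valuation) ((p : ℤ) ^ n) :=
      (((Nat.prime_iff_prime_int.1 hpp).coprime_iff_not_dvd.2 hq2).symm).pow_right
    obtain ⟨a, b, hab⟩ := hcop
    let P : ℚ_[p]ˣ := Units.mk0 (p : ℚ_[p]) (by exact_mod_cast hpp.ne_zero)
    let v := (x : ℚ_[p]).valuation
    let w : ℚ_[p]ˣ := x * ((P ^ (v * b)) ^ p ^ n * q ^ (v * a))⁻¹
    have hP : (P : ℚ_[p]).valuation = 1 := Padic.valuation_p
    have hw : (w : ℚ_[p]).valuation = 0 := by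
      simp only [w, uval_mul, uval_inv, uval_pow, uval_zpow, hP]
      push_cast
      change v + _ = 0
      linear_combination (-v) * hab
    obtain ⟨k, z, hz⟩ := zp_key p hp n (PadicInt.mkUnits (norm_one_of_val p w hw))
    have hz' := congrArg (fun t : ℤ_[p] => (t : ℚ_[p])) hz
    simp only [PadicInt.mkUnits_eq] at hz'
    push_cast at hz'
    rw [← hu] at hz'
    have hz0 : (z : ℚ_[p]) ≠ 0 := by
      intro h0
      rw [h0, zero_pow (pow_pos hpp.pos n).ne', mul_zero] at hz'
      exact w.ne_zero hz'
    have hwe : w = u ^ k * (Units.mk0 (z : ℚ_[p]) hz0) ^ p ^ n := by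
      ext; simpa using hz'
    refine ⟨k, ?_⟩
    change (QuotientGroup.mk u) ^ (k : ℤ) = _
    rw [zpow_natCast, ← QuotientGroup.mk_pow, QuotientGroup.eq, mem_H_iff]
    refine ⟨Units.mk0 (z : ℚ_[p]) hz0 * P ^ (v * b), v * a, ?_⟩
    have hx : x = w * ((P ^ (v * b)) ^ p ^ n * q ^ (v * a)) := by
      simp only [w, inv_mul_cancel_right]
    rw [hx, hwe, mul_pow]
    simp only [mul_assoc, inv_mul_cancel_left]
  refine ⟨?_, hgen⟩
  have hord : orderOf ((QuotientGroup.mk u : ℚ_[p]ˣ ⧸ Subgroup.closure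
          ((Set.range fun x : ℚ_[p]ˣ => x ^ p ^ n) ∪ {q}))) = p ^ n := by
    apply Nat.dvd_antisymm
    · rw [orderOf_dvd_iff_pow_eq_one, ← QuotientGroup.mk_pow, QuotientGroup.eq_one_iff]
      exact Subgroup.subset_closure (Or.inl ⟨u, rfl⟩)
    · set k := orderOf ((QuotientGroup.mk u : ℚ_[p]ˣ ⧸ Subgroup.closure
          ((Set.range fun x : ℚ_[p]ˣ => x ^ p ^ n) ∪ {q}))) with hk
      have h1 : (QuotientGroup.mk u : ℚ_[p]ˣ ⧸ Subgroup.closure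
          ((Set.range fun x : ℚ_[p]ˣ => x ^ p ^ n) ∪ {q})) ^ k = 1 := pow_orderOf_eq_one _
      rw [← QuotientGroup.mk_pow, QuotientGroup.eq_one_iff, mem_H_iff] at h1
      obtain ⟨y, m, hym⟩ := h1
      have h2 := congrArg (fun t : ℚ_[p]ˣ => (t : ℚ_[p]).valuation) hym
      simp only [uval_mul, uval_pow, uval_zpow, val_u p u hu] at h2
      have hcop : IsCoprime ((p : ℤ) ^ n) ((q : ℚ_[p]).valuation) :=
        (((Nat.prime_iff_prime_int.1 hpp).coprime_iff_not_dvd.2 hq2)).pow_left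
      push_cast at h2
      obtain ⟨c, rfl⟩ : (p : ℤ) ^ n ∣ m := by
        apply hcop.dvd_of_dvd_mul_right
        exact ⟨-(y : ℚ_[p]).valuation, by linear_combination -h2⟩
      have hpn : (p : ℤ) ^ n ≠ 0 := pow_ne_zero _ (by exact_mod_cast hpp.ne_zero)
      let z : ℚ_[p]ˣ := y * q ^ c
      have hzk : u ^ k = z ^ p ^ n := by
        rw [hym, mul_pow, ← zpow_natCast (q ^ c), ← zpow_mul, mul_comm c]; push_cast; rfl
      have hz : (z : ℚ_[p]).valuation = 0 := by
        simp only [z, uval_mul, uval_zpow]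
        apply mul_left_cancel₀ hpn
        linear_combination -h2
      apply zp_ord p hp n k (PadicInt.mkUnits (norm_one_of_val p z hz))
      apply Subtype.ext
      have h3 := congrArg (fun t : ℚ_[p]ˣ => (t : ℚ_[p])) hzk
      simp only [Units.val_pow_eq_pow_val, hu] at h3
      push_cast
      rw [PadicInt.mkUnits_eq]
      exact h3
  refine Eq.trans ?_ hord
  rw [← Nat.card_zpowers, (Subgroup.eq_top_iff' _).2 hgen, Subgroup.card_top]
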